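/- Let m = 2 and let G^1_1, G^1_2, G^2_1, G^2_2 ∈ ℂ[z]. Set A_i = [[0, 1], [G^i_2, G^i_1 + ψ′]] for i = 1, 2. Suppose g = [[a, 0], [c, b]] with a, b nonzero complex constants and c ∈ ℂ[z] a polynomial, and suppose ψ·(dg/dz) = g·A_2 − A_1·g. Then c = 0, a = b, G^1_1 = G^2_1 and G^1_2 = G^2_2; in particular g is a scalar multiple of the identity and A_1 = A_2. -/

import Mathlib

open Polynomial Matrix

/-- The rank-2 case of the gauge-uniqueness statement: if
`g = [[a,0],[c,b]]` (with `a, b` nonzero constants, `c` a polynomial) satisfies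
`ψ·g' = g·A₂ − A₁·g` for the modified companion matrices
`Aᵢ = [[0,1],[Gᵢ₂, Gᵢ₁ + ψ']]`, then `c = 0`, `a = b`, `G¹₁ = G²₁`, `G¹₂ = G²₂`;
in particular `g` is a scalar multiple of the identity and `A₁ = A₂`. -/
theorem rank_two_gauge_is_scalar
    (n : ℕ) (hn : 2 ≤ n) (p : Fin n → ℂ) (hp : Function.Injective p)
    (ψ : Polynomial ℂ) (hψ : ψ = ∏ i, (X - C (p i)))
    (G₁₁ G₁₂ G₂₁ G₂₂ : Polynomial ℂ)
    (A₁ A₂ : Matrix (Fin 2) (Fin 2) (Polynomial ℂ))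
    (hA₁ : A₁ = !![0, 1; G₁₂, G₁₁ + ψ.derivative])
    (hA₂ : A₂ = !![0, 1; G₂₂, G₂₁ + ψ.derivative])
    (a b : ℂ) (ha : a ≠ 0) (hb : b ≠ 0) (c : Polynomial ℂ)
    (g : Matrix (Fin 2) (Fin 2) (Polynomial ℂ))
    (hg : g = !![C a, 0; c, C b])
    (hgauge : ψ • g.map (fun q => q.derivative) = g * A₂ - A₁ * g) :
    c = 0 ∧ a = b ∧ G₁₁ = G₂₁ ∧ G₁₂ = G₂₂ ∧ A₁ = A₂ := by
  subst hA₁ hA₂ hg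
  have h00 := congrFun (congrFun hgauge 0) 0
  have h01 := congrFun (congrFun hgauge 0) 1
  have h10 := congrFun (congrFun hgauge 1) 0
  have h11 := congrFun (congrFun hgauge 1) 1
  simp [Matrix.mul_apply, Fin.sum_univ_two] at h00 h01 h10 h11
  have hc : c = 0 := by simpa using h00
  subst hc
  have hab : a = b := by
    apply C_injective
    linear_combination -h01
  subst hab
  have hCa : (C a : Polynomial ℂ) ≠ 0 := C_ne_zero.mpr ha
  have h1 : G₁₁ = G₂₁ := by
    apply mul_left_cancel₀ hCa
    linear_combination h11
  have h2 : G₁₂ = G₂₂ := by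
    apply mul_left_cancel₀ hCa
    simp at h10
    linear_combination h10
  subst h1 h2
  exact ⟨rfl, rfl, rfl, rfl, rfl⟩
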